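/- Let (A,B) be a NITA generated by a non-real b_3 of degree 3 with b̄_3·b_3 = 1 + b_8, b_3² = c_3 + b_6 with c_3 real, (b_8·b_3, b_8·b_3) = 3, and no nontrivial basis elements of degree 1 or 2. With x_6 defined by b̄_3·c_3 = b_3 + x_6, there exist d_3 ∈ B of degree 3, d_3 ∉ {c_3, b_3, b̄_3}, and x_9, x_15, d_9 such that x_9·c_3 = x̄_15 + d_3 + x̄_9; moreover d_3·d̄_3 = 1 + c_8 for some real c_8 ∈ B of degree 8 with c_8 ≠ b_8, d_3² = b_6 + y_3 for some real y_3 ∈ B of degree 3 with y_3 ∉ {b_3, b̄_3, c_3}, and y_3² = 1 + c_8. -/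

import Mathlib

/-- A normalized table algebra datum on a commutative `ℂ`-algebra `A`:
a distinguished basis `B` containing `1`, an involutive algebra
endomorphism `bar` permuting `B`, a bilinear form for which `B` is
orthonormal and which satisfies `(a, bc) = (a·b̄, c)`, nonnegative real
structure constants, and a degree homomorphism positive on `B`. -/
structure TAData (A : Type) [CommRing A] [Algebra ℂ A] : Type where
  B : Finset A
  one_mem : (1 : A) ∈ B
  indep : LinearIndependent ℂ (fun b : {x : A // x ∈ B} => (b : A))
  span_top : Submodule.span ℂ (B : Set A) = ⊤
  bar : A →ₐ[ℂ] A
  bar_bar : ∀ a : A, bar (bar a) = a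
  bar_mem : ∀ b ∈ B, bar b ∈ B
  ip : A →ₗ[ℂ] A →ₗ[ℂ] ℂ
  ip_symm : ∀ a b : A, ip a b = ip b a
  ip_self : ∀ b ∈ B, ip b b = 1
  ip_ne : ∀ b ∈ B, ∀ c ∈ B, b ≠ c → ip b c = 0
  ip_assoc : ∀ a b c : A, ip a (b * c) = ip (a * bar b) c
  struct_nonneg : ∀ b ∈ B, ∀ c ∈ B, ∀ d ∈ B, ∃ r : ℝ, 0 ≤ r ∧ ip (b * c) d = (r : ℂ)
  deg : A →ₐ[ℂ] ℂ
  deg_pos : ∀ b ∈ B, ∃ r : ℝ, 0 < r ∧ deg b = (r : ℂ)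

namespace TAData

variable {A : Type} [CommRing A] [Algebra ℂ A]

/-- Integrality (making a table algebra a NITA): all structure constants are
nonnegative integers and all degrees are positive integers. -/
def Integral (T : TAData A) : Prop :=
  (∀ b ∈ T.B, ∀ c ∈ T.B, ∀ d ∈ T.B, ∃ n : ℕ, T.ip (b * c) d = (n : ℂ)) ∧
  (∀ b ∈ T.B, ∃ n : ℕ, 0 < n ∧ T.deg b = (n : ℂ))

/-- `L₁(B) = {1}` and `L₂(B) = ∅`: no nontrivial basis elements of degree 1 or 2. -/
def NoSmall (T : TAData A) : Prop :=
  (∀ b ∈ T.B, T.deg b = 1 → b = 1) ∧ (∀ b ∈ T.B, T.deg b ≠ 2)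

/-- The table algebra is generated (as an algebra) by `b` (and its conjugate). -/
def GeneratedBy (T : TAData A) (b : A) : Prop :=
  Algebra.adjoin ℂ ({b, T.bar b} : Set A) = ⊤

/-- A table subset of `B`: contains `1`, closed under the involution and under
supports of products. -/
def IsTableSubset (T : TAData A) (C : Set A) : Prop :=
  C ⊆ ↑T.B ∧ (1 : A) ∈ C ∧ (∀ b ∈ C, T.bar b ∈ C) ∧
    ∀ b ∈ C, ∀ c ∈ C, ∀ d ∈ T.B, T.ip (b * c) d ≠ 0 → d ∈ C

end TAData

/-!
The form makes multiplication by `a` and by `ā` adjoint, so the constituents of a product are found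
by rewriting inner products with associativity; since `c₃² = 1 + b₈ = b̄₃b₃`, multiplication by `c₃`
preserves inner products exactly as multiplication by `b₃` and `b̄₃` does. An element is then
recognised from its norm and its degree, because no degree is 1 (except for the unit) or 2.

The product `c₃x̄₉` is `x₁₅ + w` with `w` of degree 12. The degree of `b₆x̄₉` bounds the norm of
`w`, which turns out to be 2. The heart of the proof is that `x₉` is a constituent of `w`:
otherwise `w` would be a sum of two basis elements of degree 6, one of which, say `s`, would
have the property that `c₃s̄` has a constituent `a` of degree 3, whereas `b̄₃a`, and hence
`c₃a`, would be a basis element of degree 9. So `w = x₉ + d̄₃`, which gives `c₃d₃ = x₉` and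
makes `b̄₃d₃` a basis element of degree 9. Then `d₃²` and `d₃d̄₃` have norm 2. Matching the
constituents of degree 8 of `b̄₃x₉` and `d₃d̄₃` yields the inner product of `b₃x₉` with `d₃²`,
which identifies the element `y₃` of `d₃² = b₆ + y₃` as a constituent of `b₃x₉`.
-/

namespace TAData

variable {A : Type} [CommRing A] [Algebra ℂ A] (T : TAData A)

/-! ### The bilinear form and the degree -/

lemma ip_mul_left (a u v : A) : T.ip (a * u) v = T.ip u (T.bar a * v) := by
  rw [T.ip_assoc, T.bar_bar, mul_comm]

lemma ip_bar_mul (a u v : A) : T.ip (T.bar a * u) v = T.ip u (a * v) := by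
  rw [ip_mul_left, T.bar_bar]

lemma ip_mul_mul_comm (a b c d : A) :
    T.ip (a * b) (c * d) = T.ip (a * T.bar c) (T.bar b * d) := by
  rw [mul_comm a b, ip_mul_left, mul_comm a, ip_bar_mul, ← mul_assoc, mul_comm (T.bar b),
    mul_assoc]

lemma ip_mul_bar_mul_bar (u v a : A) :
    T.ip (u * T.bar a) (v * T.bar a) = T.ip (u * a) (v * a) := by
  rw [mul_comm u, mul_comm v, ip_bar_mul, mul_left_comm, ← ip_mul_left, mul_comm a, mul_comm a]

lemma ip_eq_ip_one (u v : A) : T.ip u v = T.ip (u * T.bar v) 1 := by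
  rw [← T.ip_assoc, mul_one]

lemma ip_bar_bar (u v : A) : T.ip (T.bar u) (T.bar v) = T.ip u v := by
  rw [ip_eq_ip_one, T.bar_bar, mul_comm, ← ip_eq_ip_one, T.ip_symm]

lemma ip_bar_left (u v : A) : T.ip (T.bar u) v = T.ip u (T.bar v) := by
  rw [← ip_bar_bar, T.bar_bar]

lemma ip_ofNat_mul_left (n : ℕ) [n.AtLeastTwo] (u v : A) :
    T.ip (ofNat(n) * u) v = ofNat(n) * T.ip u v := by
  rw [← map_ofNat (algebraMap ℂ A), ← Algebra.smul_def, map_smul, LinearMap.smul_apply,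
    smul_eq_mul]

lemma ip_ofNat_mul_right (n : ℕ) [n.AtLeastTwo] (u v : A) :
    T.ip u (ofNat(n) * v) = ofNat(n) * T.ip u v := by
  rw [T.ip_symm, ip_ofNat_mul_left, T.ip_symm]

lemma eq_sum_ip_smul (v : A) : v = ∑ d ∈ T.B, T.ip v d • d := by
  have hv : v ∈ Submodule.span ℂ (T.B : Set A) := T.span_top ▸ Submodule.mem_top
  induction hv using Submodule.span_induction with
  | mem x hx =>
    rw [Finset.sum_eq_single_of_mem x hx, T.ip_self x hx, one_smul]
    intro d hd hdx
    rw [T.ip_ne x hx d hd hdx.symm, zero_smul]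
  | zero => simp
  | add x y _ _ hx hy =>
    conv_lhs => rw [hx, hy]
    simp [add_smul, Finset.sum_add_distrib]
  | smul a x _ hx =>
    conv_lhs => rw [hx]
    simp [Finset.smul_sum, smul_smul]

lemma ext_ip {u v : A} (h : ∀ d ∈ T.B, T.ip u d = T.ip v d) : u = v := by
  rw [T.eq_sum_ip_smul u, T.eq_sum_ip_smul v]
  exact Finset.sum_congr rfl fun d hd => by rw [h d hd]

/-- The element representing the functional `v ↦ T.deg (T.bar v)` with respect to the form. It spans
the eigenspace of the degree homomorphism, which is what makes the degree invariant under `bar`. -/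
noncomputable def degVector : A := ∑ d ∈ T.B, T.deg (T.bar d) • d

lemma ip_degVector (v : A) : T.ip v T.degVector = T.deg (T.bar v) := by
  conv_rhs => rw [T.eq_sum_ip_smul v]
  simp [degVector, mul_comm]

lemma mul_degVector (a : A) : a * T.degVector = T.deg a • T.degVector := by
  refine T.ext_ip fun e _ => ?_
  rw [T.ip_mul_left, T.ip_symm, ip_degVector, map_smul, LinearMap.smul_apply,
    T.ip_symm T.degVector, ip_degVector, map_mul, T.bar_bar, map_mul, smul_eq_mul]

lemma deg_bar_degVector_ne_zero : T.deg (T.bar T.degVector) ≠ 0 := by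
  choose! f hf hdeg using T.deg_pos
  have h : T.deg (T.bar T.degVector) = ((∑ d ∈ T.B, f (T.bar d) * f (T.bar d) : ℝ) : ℂ) := by
    simp only [degVector, map_sum, map_smul, smul_eq_mul, Complex.ofReal_sum, Complex.ofReal_mul]
    exact Finset.sum_congr rfl fun d hd => by rw [hdeg _ (T.bar_mem d hd)]
  rw [h, Complex.ofReal_ne_zero]
  exact (Finset.sum_pos (fun d hd => mul_pos (hf _ (T.bar_mem d hd)) (hf _ (T.bar_mem d hd)))
    ⟨1, T.one_mem⟩).ne'

lemma bar_degVector : T.bar T.degVector = T.degVector := by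
  refine smul_right_injective A T.deg_bar_degVector_ne_zero ?_
  calc T.deg (T.bar T.degVector) • T.bar T.degVector
      = T.bar (T.bar T.degVector * T.degVector) := by rw [mul_degVector, map_smul]
    _ = T.bar T.degVector * T.degVector := by rw [map_mul, T.bar_bar, mul_comm]
    _ = T.deg (T.bar T.degVector) • T.degVector := T.mul_degVector _

lemma deg_bar (v : A) : T.deg (T.bar v) = T.deg v := by
  rw [← ip_degVector, ← bar_degVector, ← ip_bar_left, ip_degVector, T.bar_bar]

/-! ### Nonnegative integral combinations of basis elements -/

/-- The additive monoid of nonnegative integral combinations of basis elements. -/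
def natSpan : AddSubmonoid A := AddSubmonoid.closure (T.B : Set A)

variable {T} {u v s t x : A} {k m n N : ℕ}

lemma mem_natSpan (hs : s ∈ T.B) : s ∈ T.natSpan :=
  AddSubmonoid.subset_closure hs

lemma mul_mem_natSpan (hT : T.Integral) (hu : u ∈ T.natSpan) (hv : v ∈ T.natSpan) :
    u * v ∈ T.natSpan := by
  have h := AddSubmonoid.mul_mem_mul hu hv
  rw [natSpan, AddSubmonoid.closure_mul_closure] at h
  refine AddSubmonoid.closure_le.2 ?_ h
  rintro _ ⟨b, hb, c, hc, rfl⟩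
  rw [SetLike.mem_coe, T.eq_sum_ip_smul ((fun x y => x * y) b c)]
  refine sum_mem fun d hd => ?_
  obtain ⟨n, hn⟩ := hT.1 b hb c hc d hd
  rw [hn, Nat.cast_smul_eq_nsmul]
  exact nsmul_mem (mem_natSpan hd) n

lemma exists_ip_eq_natCast (hu : u ∈ T.natSpan) (hv : v ∈ T.natSpan) :
    ∃ k : ℕ, T.ip u v = k := by
  induction hu, hv using AddSubmonoid.closure_induction₂ with
  | mem x y hx hy =>
    rcases eq_or_ne x y with rfl | h
    · exact ⟨1, by simp [T.ip_self x hx]⟩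
    · exact ⟨0, by simp [T.ip_ne x hx y hy h]⟩
  | zero_left y _ => exact ⟨0, by simp⟩
  | zero_right x _ => exact ⟨0, by simp⟩
  | add_left x y z _ _ _ hx hy =>
    obtain ⟨⟨i, hi⟩, j, hj⟩ := And.intro hx hy
    exact ⟨i + j, by simp [hi, hj]⟩
  | add_right x y z _ _ _ hx hy =>
    obtain ⟨⟨i, hi⟩, j, hj⟩ := And.intro hx hy
    exact ⟨i + j, by simp [hi, hj]⟩

lemma ip_add_left_eq_zero_iff (hu : u ∈ T.natSpan) (hv : v ∈ T.natSpan) (hs : s ∈ T.natSpan) :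
    T.ip (u + v) s = 0 ↔ T.ip u s = 0 ∧ T.ip v s = 0 := by
  obtain ⟨i, hi⟩ := exists_ip_eq_natCast hu hs
  obtain ⟨j, hj⟩ := exists_ip_eq_natCast hv hs
  rw [map_add, LinearMap.add_apply, hi, hj]
  norm_cast
  exact Nat.add_eq_zero_iff

lemma sub_mem_natSpan (hv : v ∈ T.natSpan) (hs : s ∈ T.B) (h : T.ip v s ≠ 0) :
    v - s ∈ T.natSpan := by
  induction hv using AddSubmonoid.closure_induction with
  | mem x hx =>
    obtain rfl : x = s := by
      by_contra hxs
      exact h (T.ip_ne x hx s hs hxs)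
    simp
  | zero => simp at h
  | add x y hx hy hxs hys =>
    rw [Ne, ip_add_left_eq_zero_iff hx hy (mem_natSpan hs), not_and_or] at h
    rcases h with h | h
    · rw [add_sub_right_comm]
      exact add_mem (hxs h) hy
    · rw [add_sub_assoc]
      exact add_mem hx (hys h)

lemma exists_ip_ne_zero (hv : v ≠ 0) : ∃ s ∈ T.B, T.ip v s ≠ 0 := by
  by_contra! h
  exact hv (T.ext_ip fun d hd => by simp [h d hd])

lemma exists_ip_self_eq (hv : v ∈ T.natSpan) (h0 : v ≠ 0) :
    ∃ s ∈ T.B, v - s ∈ T.natSpan ∧ ∃ i j : ℕ, T.ip (v - s) s = i ∧ T.ip (v - s) (v - s) = j ∧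
      T.ip v v = (1 + 2 * i + j : ℕ) := by
  obtain ⟨s, hs, hvs⟩ := exists_ip_ne_zero (T := T) h0
  have hw := sub_mem_natSpan hv hs hvs
  obtain ⟨i, hi⟩ := exists_ip_eq_natCast hw (mem_natSpan hs)
  obtain ⟨j, hj⟩ := exists_ip_eq_natCast hw hw
  refine ⟨s, hs, hw, i, j, hi, hj, ?_⟩
  push_cast
  rw [← hi, ← hj]
  simp only [map_sub, LinearMap.sub_apply, T.ip_symm s v, T.ip_self s hs]
  ring

lemma eq_zero_of_ip_self_eq_zero (hv : v ∈ T.natSpan) (h : T.ip v v = 0) : v = 0 := by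
  by_contra h0
  obtain ⟨s, -, -, i, j, -, -, hij⟩ := exists_ip_self_eq hv h0
  rw [h] at hij
  norm_cast at hij
  omega

lemma mem_of_ip_self_eq_one (hv : v ∈ T.natSpan) (h : T.ip v v = 1) : v ∈ T.B := by
  have h0 : v ≠ 0 := by rintro rfl; simp at h
  obtain ⟨s, hs, hw, i, j, -, hj, hij⟩ := exists_ip_self_eq hv h0
  rw [h] at hij
  norm_cast at hij
  obtain rfl : j = 0 := by omega
  rwa [sub_eq_zero.1 (eq_zero_of_ip_self_eq_zero hw (by simpa using hj))]

lemma exists_eq_add_of_ip_self_eq_two (hv : v ∈ T.natSpan) (h : T.ip v v = 2) :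
    ∃ s ∈ T.B, ∃ t ∈ T.B, v = s + t ∧ T.ip s t = 0 := by
  have h0 : v ≠ 0 := by rintro rfl; simp at h
  obtain ⟨s, hs, hw, i, j, hi, hj, hij⟩ := exists_ip_self_eq hv h0
  rw [h] at hij
  norm_cast at hij
  obtain ⟨rfl, rfl⟩ : i = 0 ∧ j = 1 := by omega
  exact ⟨s, hs, v - s, mem_of_ip_self_eq_one hw (by simpa using hj), by ring,
    by rw [T.ip_symm, hi, Nat.cast_zero]⟩

/-- `x` is a basis element of degree `n`, that is, an element written `xₙ` in the literature. -/
structure BasisElem (T : TAData A) (n : ℕ) (x : A) : Prop where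
  mem : x ∈ T.B
  deg : T.deg x = n

/-- `v` is a nonnegative integral combination of basis elements and has degree `n`. -/
structure NatComb (T : TAData A) (n : ℕ) (v : A) : Prop where
  mem : v ∈ T.natSpan
  deg : T.deg v = n

namespace BasisElem

lemma one : T.BasisElem 1 1 := ⟨T.one_mem, by simp⟩

lemma bar (hx : T.BasisElem n x) : T.BasisElem n (T.bar x) :=
  ⟨T.bar_mem x hx.mem, by rw [T.deg_bar, hx.deg]⟩

lemma natComb (hx : T.BasisElem n x) : T.NatComb n x := ⟨mem_natSpan hx.mem, hx.deg⟩

lemma ip_self (hx : T.BasisElem n x) : T.ip x x = 1 := T.ip_self x hx.mem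

lemma ip_eq_zero (hs : T.BasisElem m s) (ht : T.BasisElem n t) (h : m ≠ n := by decide) :
    T.ip s t = 0 := by
  refine T.ip_ne s hs.mem t ht.mem ?_
  rintro rfl
  exact h (by exact_mod_cast hs.deg.symm.trans ht.deg)

lemma eq_of_ip_ne_zero (hs : T.BasisElem m s) (ht : T.BasisElem n t) (h : T.ip s t ≠ 0) :
    s = t := by
  by_contra hst
  exact h (T.ip_ne s hs.mem t ht.mem hst)

lemma ip_add_self (hs : T.BasisElem m s) (ht : T.BasisElem n t) (h : m ≠ n := by decide) :
    T.ip (s + t) (s + t) = 2 := by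
  simp only [map_add, LinearMap.add_apply, hs.ip_self, ht.ip_self, hs.ip_eq_zero ht h,
    ht.ip_eq_zero hs h.symm]
  norm_num

lemma ip_add_add_self (hs : T.BasisElem k s) (ht : T.BasisElem m t) (hu : T.BasisElem n u)
    (hkm : k ≠ m := by decide) (hkn : k ≠ n := by decide) (hmn : m ≠ n := by decide) :
    T.ip (s + t + u) (s + t + u) = 3 := by
  simp only [map_add, LinearMap.add_apply, hs.ip_self, ht.ip_self, hu.ip_self,
    hs.ip_eq_zero ht hkm, hs.ip_eq_zero hu hkn, ht.ip_eq_zero hu hmn, ht.ip_eq_zero hs hkm.symm,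
    hu.ip_eq_zero hs hkn.symm, hu.ip_eq_zero ht hmn.symm]
  norm_num

lemma deg_pos (hT : T.Integral) (hx : T.BasisElem n x) : 0 < n := by
  obtain ⟨k, hk, hxk⟩ := hT.2 x hx.mem
  obtain rfl : n = k := by exact_mod_cast hx.deg.symm.trans hxk
  exact hk

lemma three_le (hT : T.Integral) (hS : T.NoSmall) (hx : T.BasisElem n x) (h1 : x ≠ 1) :
    3 ≤ n := by
  have hpos := hx.deg_pos hT
  by_contra! hlt
  obtain rfl | rfl : n = 1 ∨ n = 2 := by omega
  · exact h1 (hS.1 x hx.mem (by simpa using hx.deg))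
  · exact hS.2 x hx.mem (by simpa using hx.deg)

end BasisElem

lemma Integral.exists_basisElem (hT : T.Integral) (hx : x ∈ T.B) : ∃ n, T.BasisElem n x := by
  obtain ⟨n, -, hn⟩ := hT.2 x hx
  exact ⟨n, hx, hn⟩

lemma Integral.exists_natComb (hT : T.Integral) (hv : v ∈ T.natSpan) : ∃ n, T.NatComb n v := by
  suffices h : ∃ n : ℕ, T.deg v = n from h.imp fun n hn => ⟨hv, hn⟩
  induction hv using AddSubmonoid.closure_induction with
  | mem x hx => exact (hT.2 x hx).imp fun n hn => hn.2
  | zero => exact ⟨0, by simp⟩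
  | add x y _ _ hx hy =>
    obtain ⟨⟨m, hm⟩, n, hn⟩ := And.intro hx hy
    exact ⟨m + n, by simp [hm, hn]⟩

namespace NatComb

lemma mul (hT : T.Integral) (hu : T.NatComb m u) (hv : T.NatComb n v) :
    T.NatComb (m * n) (u * v) :=
  ⟨mul_mem_natSpan hT hu.mem hv.mem, by simp [hu.deg, hv.deg]⟩

lemma add (hu : T.NatComb m u) (hv : T.NatComb n v) : T.NatComb (m + n) (u + v) :=
  ⟨add_mem hu.mem hv.mem, by simp [hu.deg, hv.deg]⟩

lemma basisElem_of_ip_self_eq_one (hv : T.NatComb n v) (h : T.ip v v = 1) : T.BasisElem n v :=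
  ⟨mem_of_ip_self_eq_one hv.mem h, hv.deg⟩

lemma sub (hT : T.Integral) (hv : T.NatComb N v) (hs : T.BasisElem m s) (hvs : T.ip v s ≠ 0) :
    m ≤ N ∧ T.NatComb (N - m) (v - s) := by
  obtain ⟨k, hk⟩ := hT.exists_natComb (sub_mem_natSpan hv.mem hs.mem hvs)
  have h := hk.deg
  rw [map_sub, hv.deg, hs.deg, sub_eq_iff_eq_add] at h
  obtain rfl : N = k + m := by exact_mod_cast h
  exact ⟨by omega, by simpa using hk⟩

lemma deg_le (hT : T.Integral) (hv : T.NatComb N v) (hs : T.BasisElem m s) (hvs : T.ip v s ≠ 0) :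
    m ≤ N :=
  (hv.sub hT hs hvs).1

lemma of_eq_add (hT : T.Integral) (hv : T.NatComb N v) (hs : T.BasisElem m s)
    (hvs : T.ip v s ≠ 0) (e : v = s + x) : T.NatComb (N - m) x := by
  rw [← add_sub_cancel_left s x, ← e]
  exact (hv.sub hT hs hvs).2

lemma sub_nsmul (hT : T.Integral) (hv : T.NatComb N v) (hs : T.BasisElem m s)
    (hvs : T.ip v s = k) : k * m ≤ N ∧ T.NatComb (N - k * m) (v - k • s) := by
  induction k generalizing N v with
  | zero => simpa using hv
  | succ k ih =>
    obtain ⟨hle, hv'⟩ := hv.sub hT hs (by rw [hvs]; exact_mod_cast k.succ_ne_zero)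
    obtain ⟨hle', hv''⟩ := ih hv' (by simp [hvs, hs.ip_self])
    rw [succ_nsmul', ← sub_sub, Nat.succ_mul, add_comm, ← Nat.sub_sub]
    exact ⟨by omega, hv''⟩

lemma eq_zero (hT : T.Integral) (hv : T.NatComb 0 v) : v = 0 := by
  by_contra h0
  obtain ⟨s, hs, hvs⟩ := exists_ip_ne_zero (T := T) h0
  obtain ⟨m, hm⟩ := hT.exists_basisElem hs
  exact (hm.deg_pos hT).not_ge (hv.deg_le hT hm hvs)

lemma eq_of_ip_ne_zero (hT : T.Integral) (hv : T.NatComb n v) (hs : T.BasisElem n s)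
    (hvs : T.ip v s ≠ 0) : v = s := by
  have h := (hv.sub hT hs hvs).2
  rw [Nat.sub_self] at h
  exact sub_eq_zero.1 (h.eq_zero hT)

lemma ip_eq_zero (hT : T.Integral) (hv : T.NatComb n v) (hs : T.BasisElem m s)
    (hvs : T.ip v s ≠ 0) (ht : T.BasisElem n t) (h : m ≠ n := by decide) : T.ip v t = 0 := by
  by_contra hvt
  rw [hv.eq_of_ip_ne_zero hT ht hvt, ht.ip_eq_zero hs h.symm] at hvs
  exact hvs rfl

lemma exists_three_le (hT : T.Integral) (hS : T.NoSmall) (hv : T.NatComb N v) (hN : N ≠ 0)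
    (h1 : T.ip v 1 = 0) : ∃ m s, T.BasisElem m s ∧ T.ip v s ≠ 0 ∧ 3 ≤ m ∧ m ≤ N := by
  have h0 : v ≠ 0 := by
    rintro rfl
    exact hN (by exact_mod_cast (hv.deg.symm.trans (map_zero _)))
  obtain ⟨s, hs, hvs⟩ := exists_ip_ne_zero (T := T) h0
  obtain ⟨m, hm⟩ := hT.exists_basisElem hs
  exact ⟨m, s, hm, hvs, hm.three_le hT hS (by rintro rfl; exact hvs h1), hv.deg_le hT hm hvs⟩

lemma basisElem_three (hT : T.Integral) (hS : T.NoSmall) (hv : T.NatComb 3 v)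
    (h1 : T.ip v 1 = 0) : T.BasisElem 3 v := by
  obtain ⟨m, s, hs, hvs, hm, hm'⟩ := hv.exists_three_le hT hS (by decide) h1
  obtain rfl : m = 3 := by omega
  rwa [hv.eq_of_ip_ne_zero hT hs hvs]

lemma eq_add (hT : T.Integral) (hv : T.NatComb N v) (hs : T.BasisElem m s) (ht : T.BasisElem n t)
    (hst : T.ip s t = 0) (hvs : T.ip v s ≠ 0) (hvt : T.ip v t ≠ 0)
    (hN : N = m + n := by norm_num) : v = s + t := by
  have h := ((hv.sub hT hs hvs).2.sub hT ht (by simpa [hst] using hvt)).2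
  rw [show N - m - n = 0 by omega] at h
  rw [← sub_eq_zero, ← sub_sub, h.eq_zero hT]

lemma basisElem_of_ip_self_eq_three (hT : T.Integral) (hv : T.NatComb N v)
    (hs : T.BasisElem m s) (ht : T.BasisElem n t) (hst : T.ip s t = 0) (h : T.ip v v = 3)
    (hvs : T.ip v s = 1) (hvt : T.ip v t = 1) (e : v = s + t + x) :
    T.BasisElem (N - m - n) x := by
  obtain rfl : v - s - t = x := by rw [e]; ring
  refine ((hv.sub hT hs (by simp [hvs])).2.sub hT ht (by simp [hst, hvt]))
    |>.2.basisElem_of_ip_self_eq_one ?_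
  simp only [map_sub, LinearMap.sub_apply, h, hvs, hvt, hst, T.ip_symm s v, T.ip_symm t v,
    T.ip_symm t s, hs.ip_self, ht.ip_self]
  norm_num

end NatComb

/-! ### The multiplication table around `b` -/

/-- The hypotheses on the given elements, together with the definitions of the remainders `y15`,
`y9`, `u17`, `v27`, `w12` of the products `c * b8`, `c * x10`, `b̄ * x9`, `b̄ * x15`, `b̄ * y9`.
As in the literature, the numeral in the name of an element is its degree, and `b`, `c` are the
elements `b₃`, `c₃`; of the remainders, only `y15` and `y9` are always basis elements. -/
structure Configuration (T : TAData A)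
    (b c b6 b8 x6 x9 x10 x15 y9 y15 u17 v27 w12 : A) : Prop where
  int : T.Integral
  noSmall : T.NoSmall
  hb : T.BasisElem 3 b
  hc : T.BasisElem 3 c
  hb6 : T.BasisElem 6 b6
  hb8 : T.BasisElem 8 b8
  hx6 : T.BasisElem 6 x6
  hx9 : T.BasisElem 9 x9
  hx10 : T.BasisElem 10 x10
  hx15 : T.BasisElem 15 x15
  bar_c : T.bar c = c
  bar_mul_b : T.bar b * b = 1 + b8
  b_mul_b : b * b = c + b6
  c_mul_bar : c * T.bar b = b + x6
  b6_mul_bar : b6 * T.bar b = b + x15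
  x6_mul_bar : x6 * T.bar b = b8 + x10
  x10_mul_b : x10 * b = x15 + x6 + x9
  c_mul_b8 : c * b8 = c + b6 + y15
  c_mul_x10 : c * x10 = b6 + y15 + y9
  bar_mul_x9 : T.bar b * x9 = x10 + u17
  bar_mul_x15 : T.bar b * x15 = b8 + x10 + v27
  bar_mul_y9 : T.bar b * y9 = x15 + w12

namespace Configuration

variable {b c b6 b8 x6 x9 x10 x15 y9 y15 u17 v27 w12 : A}
  (C : T.Configuration b c b6 b8 x6 x9 x10 x15 y9 y15 u17 v27 w12)
include C

lemma bar_b8 : T.bar b8 = b8 := by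
  have h := congrArg T.bar C.bar_mul_b
  simp only [map_mul, map_add, map_one, T.bar_bar] at h
  linear_combination C.bar_mul_b - h

lemma c_mul_b : c * b = T.bar b + T.bar x6 := by
  simpa [T.bar_bar, C.bar_c] using congrArg T.bar C.c_mul_bar

lemma ip_c_mul (u v : A) : T.ip (c * u) v = T.ip u (c * v) := by
  rw [T.ip_mul_left, C.bar_c]

lemma ip_c_mul_c_one : T.ip (c * c) 1 = 1 := by
  rw [C.ip_c_mul, mul_one, C.hc.ip_self]

lemma ip_c_mul_c_b8 : T.ip (c * c) b8 = 1 := by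
  have h : T.ip (c * c) (T.bar b * b) = 2 := by
    calc T.ip (c * c) (T.bar b * b) = T.ip (c * b) (c * b) := by
          rw [C.ip_c_mul, mul_left_comm, ← T.ip_mul_left, mul_comm b]
      _ = 2 := by
          rw [C.c_mul_b, C.hb.bar.ip_add_self C.hx6.bar]
  rw [C.bar_mul_b, map_add, C.ip_c_mul_c_one] at h
  linear_combination h

lemma c_mul_c : c * c = 1 + b8 :=
  (C.hc.natComb.mul C.int C.hc.natComb).eq_add C.int .one C.hb8 (BasisElem.one.ip_eq_zero C.hb8)
    (by simp [C.ip_c_mul_c_one]) (by simp [C.ip_c_mul_c_b8])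

lemma ip_b_mul_b_mul (u v : A) : T.ip (b * u) (b * v) = T.ip (c * u) (c * v) := by
  rw [T.ip_mul_left, C.ip_c_mul, ← mul_assoc, ← mul_assoc, C.bar_mul_b, C.c_mul_c]

lemma ip_bar_mul_bar_mul (u v : A) :
    T.ip (T.bar b * u) (T.bar b * v) = T.ip (c * u) (c * v) := by
  rw [T.ip_bar_mul, C.ip_c_mul, ← mul_assoc, ← mul_assoc, mul_comm b, C.bar_mul_b, C.c_mul_c]

lemma b_mul_b8 : b * b8 = b + x6 + x15 := by
  linear_combination (-b) * C.bar_mul_b + T.bar b * C.b_mul_b + C.c_mul_bar + C.b6_mul_bar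

lemma c_mul_b6_eq_add_bar : c * b6 = b8 + T.bar x10 := by
  have h : T.bar x6 * b = b8 + T.bar x10 := by
    simpa [T.bar_bar, C.bar_b8] using congrArg T.bar C.x6_mul_bar
  linear_combination (-c) * C.b_mul_b + b * C.c_mul_b + C.bar_mul_b + h - C.c_mul_c

lemma ip_c_mul_b8_b6 : T.ip (c * b8) b6 = 1 := by
  simp [C.ip_c_mul, C.c_mul_b6_eq_add_bar, C.hb8.ip_self, C.hb8.ip_eq_zero C.hx10.bar]

lemma basisElem_y15 : T.BasisElem 15 y15 := by
  refine (C.hc.natComb.mul C.int C.hb8.natComb).basisElem_of_ip_self_eq_three C.int C.hc C.hb6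
    (C.hc.ip_eq_zero C.hb6) ?_ ?_ C.ip_c_mul_b8_b6 C.c_mul_b8
  · rw [← C.ip_b_mul_b_mul, C.b_mul_b8, C.hb.ip_add_add_self C.hx6 C.hx15]
  · simp [C.ip_c_mul, C.c_mul_c, C.hb8.ip_self, C.hb8.ip_eq_zero .one]

-- `c * b8` is real, so it contains `T.bar b6` along with `b6`, and has no room for both.
lemma bar_b6 : T.bar b6 = b6 := by
  have h : T.ip (c * b8) (T.bar b6) = 1 := by
    rw [← T.ip_bar_left, map_mul, C.bar_c, C.bar_b8, C.ip_c_mul_b8_b6]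
  rw [C.c_mul_b8, map_add, map_add, LinearMap.add_apply, LinearMap.add_apply,
    C.hc.ip_eq_zero C.hb6.bar, C.basisElem_y15.ip_eq_zero C.hb6.bar, zero_add, add_zero] at h
  exact (C.hb6.eq_of_ip_ne_zero C.hb6.bar (by simp [h])).symm

lemma bar_x10 : T.bar x10 = x10 := by
  have h := congrArg T.bar C.c_mul_b6_eq_add_bar
  simp only [map_mul, map_add, T.bar_bar, C.bar_c, C.bar_b6, C.bar_b8] at h
  linear_combination h - C.c_mul_b6_eq_add_bar

lemma bar_y15 : T.bar y15 = y15 := by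
  have h := congrArg T.bar C.c_mul_b8
  simp only [map_mul, map_add, C.bar_c, C.bar_b6, C.bar_b8] at h
  linear_combination C.c_mul_b8 - h

lemma bar_y9 : T.bar y9 = y9 := by
  have h := congrArg T.bar C.c_mul_x10
  simp only [map_mul, map_add, C.bar_c, C.bar_b6, C.bar_x10, C.bar_y15] at h
  linear_combination C.c_mul_x10 - h

lemma c_mul_b6 : c * b6 = b8 + x10 := by
  rw [C.c_mul_b6_eq_add_bar, C.bar_x10]

lemma b6_mul_b : b6 * b = T.bar b + T.bar x15 := by
  simpa [T.bar_bar, C.bar_b6] using congrArg T.bar C.b6_mul_bar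

lemma x10_mul_bar : x10 * T.bar b = T.bar x15 + T.bar x6 + T.bar x9 := by
  simpa [T.bar_bar, C.bar_x10] using congrArg T.bar C.x10_mul_b

lemma bar_mul_b8 : T.bar b * b8 = T.bar b + T.bar x6 + T.bar x15 := by
  simpa [C.bar_b8] using congrArg T.bar C.b_mul_b8

lemma c_mul_x6 : c * x6 = T.bar b + T.bar x15 := by
  linear_combination (-c) * C.c_mul_bar + T.bar b * C.c_mul_c + C.bar_mul_b8 - C.c_mul_b

lemma b8_mul_b6 : b8 * b6 = c + b6 + 2 * y15 + y9 := by
  linear_combination (-b6) * C.c_mul_c + c * C.c_mul_b6 + C.c_mul_b8 + C.c_mul_x10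

lemma c_mul_y15 : c * y15 = T.bar b * x15 := by
  linear_combination (-c) * C.c_mul_b8 + b8 * C.c_mul_c - C.c_mul_c - C.c_mul_b6 +
    T.bar b * C.b_mul_b8 - b8 * C.bar_mul_b + C.bar_mul_b + C.x6_mul_bar

lemma basisElem_y9 : T.BasisElem 9 y9 := by
  refine (C.hc.natComb.mul C.int C.hx10.natComb).basisElem_of_ip_self_eq_three C.int C.hb6
    C.basisElem_y15 (C.hb6.ip_eq_zero C.basisElem_y15) ?_ ?_ ?_ C.c_mul_x10
  · rw [← C.ip_b_mul_b_mul, mul_comm b, C.x10_mul_b, C.hx15.ip_add_add_self C.hx6 C.hx9]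
  · simp [C.ip_c_mul, C.c_mul_b6, C.hx10.ip_self, C.hx10.ip_eq_zero C.hb8]
  · rw [C.ip_c_mul, C.c_mul_y15, ← T.ip_mul_left, mul_comm, C.x10_mul_b]
    simp [C.hx15.ip_self, C.hx6.ip_eq_zero C.hx15, C.hx9.ip_eq_zero C.hx15]

lemma b_mul_x15 : b * x15 = b6 + 2 * y15 + y9 := by
  linear_combination (-b) * C.b6_mul_bar + b6 * C.bar_mul_b + C.b8_mul_b6 - C.b_mul_b

lemma c_mul_x15 : c * x15 = T.bar x6 + 2 * T.bar x15 + T.bar x9 := by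
  linear_combination (-c) * C.b6_mul_bar + T.bar b * C.c_mul_b6 + C.bar_mul_b8 + C.x10_mul_bar -
    C.c_mul_b

lemma c_mul_bar_x15 : c * T.bar x15 = x6 + 2 * x15 + x9 := by
  simpa [T.bar_bar, C.bar_c, map_ofNat] using congrArg T.bar C.c_mul_x15

lemma b_mul_y15 : b * y15 = T.bar x6 + 2 * T.bar x15 + T.bar x9 := by
  linear_combination C.c_mul_x15 + c * C.b_mul_b8 - b * C.c_mul_b8 - C.b6_mul_b + C.c_mul_x6

lemma bar_mul_y15 : T.bar b * y15 = x6 + 2 * x15 + x9 := by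
  simpa [T.bar_bar, C.bar_y15, map_ofNat] using congrArg T.bar C.b_mul_y15

lemma c_mul_x9_eq_b_mul_y9 : c * x9 = b * y9 := by
  linear_combination (-c) * C.x10_mul_b + b * C.c_mul_x10 + C.b_mul_y15 - C.c_mul_x15 -
    C.c_mul_x6 + C.b6_mul_b

lemma c_mul_bar_x9 : c * T.bar x9 = x15 + w12 := by
  rw [← C.bar_mul_y9]
  simpa [C.bar_c, C.bar_y9] using congrArg T.bar C.c_mul_x9_eq_b_mul_y9

lemma c_mul_x9 : c * x9 = T.bar x15 + T.bar w12 := by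
  simpa [T.bar_bar, C.bar_c] using congrArg T.bar C.c_mul_bar_x9

lemma c_mul_y9 : c * y9 = x10 + u17 := by
  rw [← C.bar_mul_x9]
  linear_combination (-c) * C.c_mul_x10 + x10 * C.c_mul_c - C.c_mul_b6 - C.c_mul_y15 +
    T.bar b * C.x10_mul_b - x10 * C.bar_mul_b + C.x6_mul_bar

lemma b_mul_bar_x15 : b * T.bar x15 = T.bar b * x15 := by
  have h := congrArg T.bar C.c_mul_y15
  simp only [map_mul, T.bar_bar, C.bar_c, C.bar_y15] at h
  rw [← h, C.c_mul_y15]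

lemma b_mul_bar_x9 : b * T.bar x9 = T.bar b * x9 := by
  have h := congrArg T.bar C.c_mul_y9
  rw [← C.bar_mul_x9] at h
  simp only [map_mul, T.bar_bar, C.bar_c, C.bar_y9] at h
  rw [← h, C.c_mul_y9, C.bar_mul_x9]

/-! ### The norm of `w12` -/

lemma ip_bar_mul_y9_x15 : T.ip (T.bar b * y9) x15 = 1 := by
  rw [T.ip_bar_mul, C.b_mul_x15]
  simp [T.ip_ofNat_mul_right, C.basisElem_y9.ip_self, C.basisElem_y9.ip_eq_zero C.hb6,
    C.basisElem_y9.ip_eq_zero C.basisElem_y15]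

lemma natComb_w12 : T.NatComb 12 w12 :=
  (C.hb.bar.natComb.mul C.int C.basisElem_y9.natComb).of_eq_add C.int C.hx15
    (by simp [C.ip_bar_mul_y9_x15]) C.bar_mul_y9

lemma ip_w12_x15 : T.ip w12 x15 = 0 := by
  simpa [C.bar_mul_y9, C.hx15.ip_self] using C.ip_bar_mul_y9_x15

lemma ip_bar_mul_x9_x10 : T.ip (T.bar b * x9) x10 = 1 := by
  rw [T.ip_bar_mul, mul_comm, C.x10_mul_b]
  simp [C.hx9.ip_self, C.hx9.ip_eq_zero C.hx15, C.hx9.ip_eq_zero C.hx6]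

lemma natComb_u17 : T.NatComb 17 u17 :=
  (C.hb.bar.natComb.mul C.int C.hx9.natComb).of_eq_add C.int C.hx10
    (by simp [C.ip_bar_mul_x9_x10]) C.bar_mul_x9

lemma ip_u17_x10 : T.ip u17 x10 = 0 := by
  simpa [C.bar_mul_x9, C.hx10.ip_self] using C.ip_bar_mul_x9_x10

lemma ip_u17_b8 : T.ip u17 b8 = 0 := by
  have h : T.ip (T.bar b * x9) b8 = 0 := by
    rw [T.ip_bar_mul, C.b_mul_b8]
    simp [C.hx9.ip_eq_zero C.hb, C.hx9.ip_eq_zero C.hx6, C.hx9.ip_eq_zero C.hx15]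
  simpa [C.bar_mul_x9, C.hx10.ip_eq_zero C.hb8] using h

lemma ip_u17_one : T.ip u17 1 = 0 := by
  have h : T.ip (T.bar b * x9) 1 = 0 := by
    rw [T.ip_bar_mul, mul_one, C.hx9.ip_eq_zero C.hb]
  simpa [C.bar_mul_x9, C.hx10.ip_eq_zero .one] using h

lemma ip_bar_mul_x15_b8 : T.ip (T.bar b * x15) b8 = 1 := by
  rw [T.ip_bar_mul, C.b_mul_b8]
  simp [C.hx15.ip_self, C.hx15.ip_eq_zero C.hb, C.hx15.ip_eq_zero C.hx6]

lemma ip_bar_mul_x15_x10 : T.ip (T.bar b * x15) x10 = 1 := by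
  rw [T.ip_bar_mul, mul_comm, C.x10_mul_b]
  simp [C.hx15.ip_self, C.hx15.ip_eq_zero C.hx6, C.hx15.ip_eq_zero C.hx9]

lemma ip_v27_b8 : T.ip v27 b8 = 0 := by
  simpa [C.bar_mul_x15, C.hb8.ip_self, C.hx10.ip_eq_zero C.hb8] using C.ip_bar_mul_x15_b8

lemma ip_v27_x10 : T.ip v27 x10 = 0 := by
  simpa [C.bar_mul_x15, C.hx10.ip_self, C.hb8.ip_eq_zero C.hx10] using C.ip_bar_mul_x15_x10

lemma ip_v27_one : T.ip v27 1 = 0 := by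
  have h : T.ip (T.bar b * x15) 1 = 0 := by
    rw [T.ip_bar_mul, mul_one, C.hx15.ip_eq_zero C.hb]
  simpa [C.bar_mul_x15, C.hb8.ip_eq_zero .one, C.hx10.ip_eq_zero .one] using h

lemma natComb_v27 : T.NatComb 27 v27 := by
  have h := (C.hb.bar.natComb.mul C.int C.hx15.natComb).of_eq_add C.int C.hb8
    (by simp [C.ip_bar_mul_x15_b8]) (C.bar_mul_x15.trans (add_assoc _ _ _))
  exact h.of_eq_add C.int C.hx10 (by simp [C.hx10.ip_self, C.ip_v27_x10]) rfl

lemma ip_self_u17 : T.ip u17 u17 = T.ip w12 w12 := by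
  have h : T.ip (b * y9) (b * y9) = T.ip (c * y9) (c * y9) := C.ip_b_mul_b_mul y9 y9
  rw [← C.c_mul_x9_eq_b_mul_y9, C.c_mul_x9, C.c_mul_y9] at h
  simp only [map_add, LinearMap.add_apply, T.ip_bar_bar, C.hx15.ip_self, C.hx10.ip_self,
    C.ip_w12_x15, T.ip_symm x15 w12, C.ip_u17_x10, T.ip_symm x10 u17] at h
  linear_combination -h

lemma ip_self_v27 : T.ip v27 v27 = 4 := by
  have h : T.ip (T.bar b * x15) (T.bar b * x15) = T.ip (b * x15) (b * x15) := by
    rw [C.ip_bar_mul_bar_mul, C.ip_b_mul_b_mul]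
  rw [C.bar_mul_x15, C.b_mul_x15] at h
  simp only [map_add, LinearMap.add_apply, T.ip_ofNat_mul_left, T.ip_ofNat_mul_right,
    C.hb8.ip_self, C.hx10.ip_self, C.hb6.ip_self, C.basisElem_y15.ip_self, C.basisElem_y9.ip_self,
    C.hb8.ip_eq_zero C.hx10, C.hx10.ip_eq_zero C.hb8, C.hb6.ip_eq_zero C.basisElem_y15,
    C.hb6.ip_eq_zero C.basisElem_y9, C.basisElem_y15.ip_eq_zero C.hb6,
    C.basisElem_y15.ip_eq_zero C.basisElem_y9, C.basisElem_y9.ip_eq_zero C.hb6,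
    C.basisElem_y9.ip_eq_zero C.basisElem_y15, C.ip_v27_b8, C.ip_v27_x10, T.ip_symm b8 v27,
    T.ip_symm x10 v27] at h
  linear_combination h

lemma b8_mul_x15 : b8 * x15 = b + 2 * x6 + 5 * x15 + 2 * x9 + w12 := by
  linear_combination (-x15) * C.bar_mul_b + T.bar b * C.b_mul_x15 + 2 * C.bar_mul_y15 +
    C.b6_mul_bar + C.bar_mul_y9

lemma ip_u17_v27 : T.ip u17 v27 = 1 + T.ip w12 x9 := by
  have h : T.ip (T.bar b * x9) (T.bar b * x15) = 2 + T.ip x9 w12 := by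
    rw [T.ip_bar_mul, ← mul_assoc, mul_comm b, C.bar_mul_b, add_mul, one_mul, C.b8_mul_x15]
    simp [T.ip_ofNat_mul_right, C.hx9.ip_self, C.hx9.ip_eq_zero C.hb, C.hx9.ip_eq_zero C.hx6,
      C.hx9.ip_eq_zero C.hx15]
  rw [C.bar_mul_x9, C.bar_mul_x15] at h
  simp only [map_add, LinearMap.add_apply, C.hx10.ip_self, C.hx10.ip_eq_zero C.hb8, C.ip_u17_b8,
    C.ip_u17_x10, T.ip_symm x10 v27, C.ip_v27_x10, T.ip_symm x9 w12] at h
  linear_combination h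

lemma b_mul_v27 : b * v27 = 4 * x15 + x9 + w12 := by
  linear_combination (-b) * C.bar_mul_x15 + x15 * C.bar_mul_b + C.b8_mul_x15 - C.b_mul_b8 -
    C.x10_mul_b

lemma b_mul_u17 : b * u17 = x15 + c * T.bar w12 := by
  linear_combination (-b) * C.bar_mul_x9 + x9 * C.bar_mul_b - C.x10_mul_b - x9 * C.c_mul_c +
    c * C.c_mul_x9 + C.c_mul_bar_x15

lemma b6_mul_bar_x9 : b6 * T.bar x9 = x6 + x9 + b * u17 - w12 := by
  linear_combination (-T.bar x9) * C.b_mul_b + b * C.b_mul_bar_x9 + b * C.bar_mul_x9 +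
    C.x10_mul_b - C.c_mul_bar_x9

lemma b6_mul_x6 : b6 * x6 = 2 * T.bar x6 + T.bar x15 + T.bar x9 := by
  linear_combination (-b6) * C.c_mul_bar + T.bar b * C.c_mul_b6 - C.b6_mul_b + C.bar_mul_b8 +
    C.x10_mul_bar

lemma b6_mul_x15 :
    b6 * x15 = T.bar b + T.bar x6 + 4 * T.bar x15 + T.bar x9 + T.bar w12 := by
  linear_combination (-x15) * C.b_mul_b + b * C.b_mul_x15 + C.b6_mul_b + 2 * C.b_mul_y15 -
    C.c_mul_x9_eq_b_mul_y9 + C.c_mul_x9 - C.c_mul_x15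

lemma ip_b6_mul (u v : A) : T.ip (b6 * u) v = T.ip u (b6 * v) := by
  rw [T.ip_mul_left, C.bar_b6]

lemma ip_b6_mul_bar_x9_x6 : T.ip (b6 * T.bar x9) x6 = 1 := by
  rw [C.ip_b6_mul, C.b6_mul_x6]
  simp [T.ip_ofNat_mul_right, T.ip_bar_bar, C.hx9.ip_self, C.hx9.ip_eq_zero C.hx6,
    C.hx9.ip_eq_zero C.hx15]

lemma ip_b6_mul_bar_x9_x15 : T.ip (b6 * T.bar x9) x15 = 1 + T.ip w12 x9 := by
  rw [C.ip_b6_mul, C.b6_mul_x15]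
  simp [T.ip_ofNat_mul_right, T.ip_bar_bar, C.hx9.ip_self, C.hx9.ip_eq_zero C.hx6,
    C.hx9.ip_eq_zero C.hb, C.hx9.ip_eq_zero C.hx15, T.ip_symm x9 w12]

lemma ip_b6_mul_bar_x9_x9 : T.ip (b6 * T.bar x9) x9 = 1 + T.ip w12 w12 - T.ip w12 x9 := by
  have h : T.ip (b * u17) x9 = T.ip w12 w12 := by
    rw [T.ip_mul_left, C.bar_mul_x9, map_add, C.ip_u17_x10, C.ip_self_u17, zero_add]
  rw [C.b6_mul_bar_x9]
  simp [h, C.hx9.ip_self, C.hx6.ip_eq_zero C.hx9]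

lemma natComb_b6_mul_bar_x9_sub {i j : ℕ} (hi : T.ip (b6 * T.bar x9) x15 = i)
    (hj : T.ip (b6 * T.bar x9) x9 = j) :
    6 + i * 15 + j * 9 ≤ 54 ∧
      T.NatComb (54 - 6 - i * 15 - j * 9) (b6 * T.bar x9 - x6 - i • x15 - j • x9) := by
  obtain ⟨-, h6⟩ := (C.hb6.natComb.mul C.int C.hx9.bar.natComb).sub C.int C.hx6
    (by simp [C.ip_b6_mul_bar_x9_x6])
  obtain ⟨hi', h15⟩ := h6.sub_nsmul C.int C.hx15 (k := i) (by simp [hi, C.hx6.ip_eq_zero C.hx15])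
  obtain ⟨hj', h9⟩ := h15.sub_nsmul C.int C.hx9 (k := j)
    (by simp [-nsmul_eq_mul, hj, C.hx6.ip_eq_zero C.hx9, C.hx15.ip_eq_zero C.hx9])
  exact ⟨by omega, h9⟩

-- `b * (v27 - r)` contains `x15` three times.
lemma natComb_sub_b_mul {r : A} (hr : T.BasisElem m r) (h : T.ip v27 r = 1) :
    3 * m ≤ 36 ∧ T.NatComb (36 - 3 * m) (x15 + x9 + w12 - b * r) := by
  obtain ⟨hm, hV⟩ := C.natComb_v27.sub C.int hr (by simp [h])
  have h8 : T.ip r b8 = 0 := T.ip_ne _ hr.mem _ C.hb8.mem fun e => by simp [e, C.ip_v27_b8] at h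
  have h10 : T.ip r x10 = 0 := T.ip_ne _ hr.mem _ C.hx10.mem fun e => by
    simp [e, C.ip_v27_x10] at h
  have h15 : T.ip (b * (v27 - r)) x15 = 3 := by
    rw [T.ip_mul_left, C.bar_mul_x15]
    simp only [map_add, map_sub, LinearMap.sub_apply, C.ip_v27_b8, C.ip_v27_x10, C.ip_self_v27, h8,
      h10, T.ip_symm r v27, h]
    norm_num
  obtain ⟨hle, hP⟩ := (C.hb.natComb.mul C.int hV).sub_nsmul C.int C.hx15 (k := 3) (by simp [h15])
  refine ⟨by omega, ?_⟩
  rw [show 3 * (27 - m) - 3 * 15 = 36 - 3 * m by omega] at hP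
  convert hP using 1
  simp only [nsmul_eq_mul, Nat.cast_ofNat]
  linear_combination -C.b_mul_v27

lemma ip_self_w12 : T.ip w12 w12 = 2 := by
  obtain ⟨k, hk⟩ := exists_ip_eq_natCast C.natComb_w12.mem C.natComb_w12.mem
  obtain ⟨t, ht⟩ := exists_ip_eq_natCast C.natComb_w12.mem C.hx9.natComb.mem
  obtain ⟨j, hj⟩ := exists_ip_eq_natCast
    (mul_mem_natSpan C.int C.hb6.natComb.mem C.hx9.bar.natComb.mem) C.hx9.natComb.mem
  obtain ⟨hle, -⟩ := C.natComb_b6_mul_bar_x9_sub (i := 1 + t) (by simp [C.ip_b6_mul_bar_x9_x15, ht])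
    hj
  have hjt : j + t = 1 + k := by
    rw [C.ip_b6_mul_bar_x9_x9, hk, ht, sub_eq_iff_eq_add] at hj
    exact_mod_cast hj.symm
  have hk0 : k ≠ 0 := by
    rintro rfl
    have h := C.natComb_w12.deg
    simp [eq_zero_of_ip_self_eq_zero C.natComb_w12.mem (by simpa using hk)] at h
  have hk1 : k ≠ 1 := by
    rintro rfl
    rw [Nat.cast_one] at hk
    have hw := C.natComb_w12.basisElem_of_ip_self_eq_one hk
    have hu := C.natComb_u17.basisElem_of_ip_self_eq_one (C.ip_self_u17.trans hk)
    have h := C.natComb_sub_b_mul hu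
      (by rw [T.ip_symm, C.ip_u17_v27, hw.ip_eq_zero C.hx9, add_zero])
    omega
  rw [hk, show k = 2 by omega, Nat.cast_ofNat]

/-! ### The constituent `x9` of `w12` -/

lemma ip_eq_zero_of_ip_u17_ne_zero {f : A} (hf : f ∈ T.B) (hu : T.ip u17 f ≠ 0) :
    T.ip f 1 = 0 ∧ T.ip f b8 = 0 ∧ T.ip f x10 = 0 := by
  refine ⟨T.ip_ne _ hf _ T.one_mem ?_, T.ip_ne _ hf _ C.hb8.mem ?_, T.ip_ne _ hf _ C.hx10.mem ?_⟩
  · rintro rfl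
    exact hu C.ip_u17_one
  · rintro rfl
    exact hu C.ip_u17_b8
  · rintro rfl
    exact hu C.ip_u17_x10

lemma ip_b_mul_w12_ne_zero {f : A} (hf : f ∈ T.B) (hu : T.ip u17 f ≠ 0) (hv : T.ip v27 f = 0) :
    T.ip (b * f) w12 ≠ 0 := by
  obtain ⟨-, h8, h10⟩ := C.ip_eq_zero_of_ip_u17_ne_zero hf hu
  have h15 : T.ip (b * f) x15 = 0 := by
    rw [T.ip_mul_left, C.bar_mul_x15, map_add, map_add, h8, h10, T.ip_symm f, hv, add_zero,
      add_zero]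
  have hne : T.ip (T.bar b * f) (T.bar x9) ≠ 0 := by
    rwa [T.ip_bar_mul, C.b_mul_bar_x9, C.bar_mul_x9, map_add, h10, zero_add, T.ip_symm]
  have hsplit : T.ip (b * f) w12 = T.ip (T.bar b * f + T.bar x6 * f) (T.bar x9) := by
    calc T.ip (b * f) w12 = T.ip (b * f) (c * T.bar x9) := by
          rw [C.c_mul_bar_x9, map_add, h15, zero_add]
      _ = T.ip (T.bar b * f + T.bar x6 * f) (T.bar x9) := by
          rw [← C.ip_c_mul, ← mul_assoc, C.c_mul_b, add_mul]
  have hf' := mem_natSpan hf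
  rw [hsplit, Ne, ip_add_left_eq_zero_iff (mul_mem_natSpan C.int C.hb.bar.natComb.mem hf')
    (mul_mem_natSpan C.int C.hx6.bar.natComb.mem hf') C.hx9.bar.natComb.mem]
  exact fun h => hne h.1

lemma ip_c_mul_bar_x9_ne_zero {s : A} (hs : s ∈ T.B) (hws : T.ip w12 s ≠ 0) :
    T.ip (c * T.bar s) x9 ≠ 0 := by
  have h15 : T.ip s x15 = 0 := T.ip_ne _ hs _ C.hx15.mem fun e => hws (e ▸ C.ip_w12_x15)
  rwa [C.ip_c_mul, C.c_mul_x9, ← map_add, T.ip_bar_bar, map_add, h15, zero_add, T.ip_symm]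

lemma exists_b_mul_u17_eq (h : T.ip w12 x9 = 0) :
    ∃ q, T.NatComb 6 q ∧ b * u17 = x15 + 2 * x9 + q + w12 := by
  obtain ⟨-, hq⟩ := C.natComb_b6_mul_bar_x9_sub (i := 1) (j := 3)
    (by simp [C.ip_b6_mul_bar_x9_x15, h])
    (by rw [C.ip_b6_mul_bar_x9_x9, C.ip_self_w12, h]; norm_num)
  refine ⟨_, hq, ?_⟩
  simp only [nsmul_eq_mul, Nat.cast_ofNat, one_smul]
  linear_combination -C.b6_mul_bar_x9

lemma ip_c_mul_bar_w12_ne_zero (h : T.ip w12 x9 = 0) {s : A} (hs : s ∈ T.B)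
    (hws : T.ip w12 s ≠ 0) : T.ip (c * T.bar s) w12 ≠ 0 := by
  obtain ⟨q, hq, hbu⟩ := C.exists_b_mul_u17_eq h
  have hcw : c * T.bar w12 = (x9 + x9 + q) + w12 := by
    linear_combination hbu - C.b_mul_u17
  have hx9 := C.hx9.natComb.mem
  rw [C.ip_c_mul, T.ip_bar_left, map_mul, C.bar_c, T.ip_symm, hcw, Ne,
    ip_add_left_eq_zero_iff (add_mem (add_mem hx9 hx9) hq.mem) C.natComb_w12.mem (mem_natSpan hs)]
  exact fun h => hws h.2

-- `c * T.bar s` contains `x9` and one of `s`, `t`, which leaves room for a third constituent of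
-- degree at most 3.
lemma deg_eq_six_of_w12_eq_add (h : T.ip w12 x9 = 0) {s t : A} (hs : T.BasisElem m s)
    (ht : T.BasisElem n t) (hst : T.ip s t = 0) (hw : w12 = s + t) (hmn : m ≤ n) :
    m = 6 ∧ n = 6 ∧ ∃ a, T.BasisElem 3 a ∧ T.ip (c * T.bar s) a ≠ 0 := by
  have hdeg : m + n = 12 := by
    exact_mod_cast (hs.natComb.add ht.natComb).deg.symm.trans (hw ▸ C.natComb_w12.deg)
  have hws : T.ip w12 s ≠ 0 := by simp [hw, hs.ip_self, T.ip_symm t s, hst]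
  have hx9 := C.ip_c_mul_bar_x9_ne_zero hs.mem hws
  obtain ⟨z, k, hz, hk, hcz, hxz⟩ :
      ∃ z k, T.BasisElem k z ∧ (k = m ∨ k = n) ∧ T.ip (c * T.bar s) z ≠ 0 ∧ T.ip x9 z = 0 := by
    have hw' := C.ip_c_mul_bar_w12_ne_zero h hs.mem hws
    rw [hw, map_add] at hw'
    rw [hw, ip_add_left_eq_zero_iff hs.natComb.mem ht.natComb.mem C.hx9.natComb.mem] at h
    by_cases hcs : T.ip (c * T.bar s) s = 0
    · exact ⟨t, n, ht, .inr rfl, by simpa [hcs] using hw', by rw [T.ip_symm, h.2]⟩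
    · exact ⟨s, m, hs, .inl rfl, hcs, by rw [T.ip_symm, h.1]⟩
  obtain ⟨hle, hv⟩ := (C.hc.natComb.mul C.int hs.bar.natComb).sub C.int C.hx9 hx9
  obtain ⟨hle', hv'⟩ := hv.sub C.int hz (by simpa [hxz] using hcz)
  have h1 : T.ip (c * T.bar s - x9 - z) 1 = 0 := by
    have hs1 : T.ip s c = 0 := hs.ip_eq_zero C.hc (by omega)
    have hz1 : T.ip z 1 = 0 := hz.ip_eq_zero .one (by omega)
    simp [C.ip_c_mul, T.ip_bar_left, C.bar_c, hs1, hz1, C.hx9.ip_eq_zero .one]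
  obtain ⟨l, a, ha, hva, hl, hl'⟩ := hv'.exists_three_le C.int C.noSmall (by omega) h1
  obtain ⟨rfl, rfl, rfl, rfl⟩ : m = 6 ∧ n = 6 ∧ k = 6 ∧ l = 3 := by omega
  exact ⟨rfl, rfl, a, ha, by simpa [C.hx9.ip_eq_zero ha, hz.ip_eq_zero ha] using hva⟩

lemma exists_w12_eq_add (h : T.ip w12 x9 = 0) : ∃ s t a, T.BasisElem 6 s ∧ T.BasisElem 6 t ∧
    T.BasisElem 3 a ∧ w12 = s + t ∧ T.ip (c * T.bar s) a ≠ 0 := by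
  obtain ⟨s, hs, t, ht, hw, hst⟩ := exists_eq_add_of_ip_self_eq_two C.natComb_w12.mem C.ip_self_w12
  obtain ⟨⟨m, hs⟩, n, ht⟩ := And.intro (C.int.exists_basisElem hs) (C.int.exists_basisElem ht)
  rcases le_total m n with hmn | hmn
  · obtain ⟨rfl, rfl, a, ha, hca⟩ := C.deg_eq_six_of_w12_eq_add h hs ht hst hw hmn
    exact ⟨s, t, a, hs, ht, ha, hw, hca⟩
  · rw [T.ip_symm] at hst
    obtain ⟨rfl, rfl, a, ha, hca⟩ :=
      C.deg_eq_six_of_w12_eq_add h ht hs hst (hw.trans (add_comm s t)) hmn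
    exact ⟨t, s, a, ht, hs, ha, hw.trans (add_comm s t), hca⟩

lemma exists_u17_eq_add (h : T.ip w12 x9 = 0) : ∃ m n r f, T.BasisElem m r ∧ T.BasisElem n f ∧
    u17 = r + f ∧ m + n = 17 ∧ T.ip u17 f ≠ 0 ∧ T.ip v27 r = 1 ∧ T.ip v27 f = 0 := by
  obtain ⟨r, hr, f, hf, hu, hrf⟩ := exists_eq_add_of_ip_self_eq_two C.natComb_u17.mem
    (C.ip_self_u17.trans C.ip_self_w12)
  obtain ⟨⟨m, hr⟩, n, hf⟩ := And.intro (C.int.exists_basisElem hr) (C.int.exists_basisElem hf)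
  have hdeg : m + n = 17 := by
    exact_mod_cast (hr.natComb.add hf.natComb).deg.symm.trans (hu ▸ C.natComb_u17.deg)
  obtain ⟨i, hi⟩ := exists_ip_eq_natCast C.natComb_v27.mem hr.natComb.mem
  obtain ⟨j, hj⟩ := exists_ip_eq_natCast C.natComb_v27.mem hf.natComb.mem
  have hij : i + j = 1 := by
    have huv := C.ip_u17_v27
    rw [h, add_zero, T.ip_symm, hu, map_add, hi, hj] at huv
    exact_mod_cast huv
  obtain ⟨rfl, rfl⟩ | ⟨rfl, rfl⟩ : i = 1 ∧ j = 0 ∨ i = 0 ∧ j = 1 := by omega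
  · exact ⟨m, n, r, f, hr, hf, hu, hdeg, by simp [hu, hrf, hf.ip_self], by simp [hi],
      by simp [hj]⟩
  · exact ⟨n, m, f, r, hf, hr, hu.trans (add_comm r f), by omega,
      by simp [hu, T.ip_symm f r, hrf, hr.ip_self], by simp [hj], by simp [hi]⟩

lemma basisElem_bar_mul {a f : A} (ha : T.BasisElem 3 a) (hf : T.BasisElem n f) (hn : 7 ≤ n)
    (hu : T.ip u17 f ≠ 0) (h : T.ip (b * f) a ≠ 0) : T.BasisElem 9 (T.bar b * a) := by
  obtain ⟨hf1, hf8, -⟩ := C.ip_eq_zero_of_ip_u17_ne_zero hf.mem hu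
  have hne : T.ip (T.bar b * a) f ≠ 0 := by rwa [T.ip_bar_mul, T.ip_symm]
  have hab : T.ip a b = 0 := by
    refine T.ip_ne _ ha.mem _ C.hb.mem ?_
    rintro rfl
    rw [T.ip_mul_left, C.bar_mul_b, map_add, hf1, hf8, add_zero] at h
    exact h rfl
  have hba := C.hb.bar.natComb.mul C.int ha.natComb
  obtain ⟨hle, hrem⟩ := hba.sub C.int hf hne
  have hn9 : n = 9 := by
    by_contra hn9
    obtain ⟨_, _, _, _, _, _⟩ := hrem.exists_three_le C.int C.noSmall (by omega)
      (by simp [T.ip_bar_mul, hab, hf1])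
    omega
  subst hn9
  rwa [hba.eq_of_ip_ne_zero C.int hf hne]

lemma ip_ne_zero_of_b_mul_u17_eq {q s t a : A} (hbu : b * u17 = x15 + 2 * x9 + q + w12)
    (hs : T.BasisElem 6 s) (ht : T.BasisElem 6 t) (hw : w12 = s + t) (ha : T.BasisElem 3 a)
    (hca : T.ip (c * T.bar s) a ≠ 0) : T.ip q a ≠ 0 := by
  have hcw : c * T.bar s + c * T.bar t = x9 + x9 + q + (s + t) := by
    rw [← mul_add, ← map_add, ← hw]
    linear_combination hbu - C.b_mul_u17
  have hne : T.ip (c * T.bar s + c * T.bar t) a ≠ 0 := by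
    rw [Ne, ip_add_left_eq_zero_iff (mul_mem_natSpan C.int C.hc.natComb.mem hs.bar.natComb.mem)
      (mul_mem_natSpan C.int C.hc.natComb.mem ht.bar.natComb.mem) ha.natComb.mem]
    exact fun h => hca h.1
  rw [hcw] at hne
  simpa [C.hx9.ip_eq_zero ha, hs.ip_eq_zero ha, ht.ip_eq_zero ha] using hne

lemma ip_w12_x9_ne_zero : T.ip w12 x9 ≠ 0 := by
  intro h
  obtain ⟨q, hq, hbu⟩ := C.exists_b_mul_u17_eq h
  obtain ⟨s, t, a, hs, ht, ha, hw, hca⟩ := C.exists_w12_eq_add h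
  obtain ⟨m, n, r, f, hr, hf, hu, hdeg, huf, hvr, hvf⟩ := C.exists_u17_eq_add h
  have hqa := C.ip_ne_zero_of_b_mul_u17_eq hbu hs ht hw ha hca
  obtain ⟨hm, hP⟩ := C.natComb_sub_b_mul hr hvr
  have hbf : b * f = x9 + q + (x15 + x9 + w12 - b * r) := by
    linear_combination hbu - b * hu
  generalize x15 + x9 + w12 - b * r = P at hP hbf
  have hPst : T.ip P s ≠ 0 ∨ T.ip P t ≠ 0 := by
    have hbfw := C.ip_b_mul_w12_ne_zero hf.mem huf hvf
    rw [← not_and_or]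
    rintro ⟨hPs, hPt⟩
    simp [hbf, hw, hPs, hPt, C.hx9.ip_eq_zero hs, C.hx9.ip_eq_zero ht,
      hq.ip_eq_zero C.int ha hqa hs, hq.ip_eq_zero C.int ha hqa ht] at hbfw
  have hn : 7 ≤ n := by
    have h6 : 6 ≤ 36 - 3 * m := hPst.elim (hP.deg_le C.int hs) (hP.deg_le C.int ht)
    omega
  have hba : T.BasisElem 9 (T.bar b * a) := C.basisElem_bar_mul ha hf hn huf (by
    rw [hbf, Ne, ip_add_left_eq_zero_iff (add_mem C.hx9.natComb.mem hq.mem) hP.mem ha.natComb.mem]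
    simp [C.hx9.ip_eq_zero ha, hqa])
  have hcaB : T.BasisElem 9 (c * a) :=
    (C.hc.natComb.mul C.int ha.natComb).basisElem_of_ip_self_eq_one
      (by rw [← C.ip_bar_mul_bar_mul, hba.ip_self])
  rw [C.ip_c_mul, T.ip_symm, hcaB.ip_eq_zero hs.bar] at hca
  exact hca rfl

lemma exists_w12_eq_x9_add : ∃ d, T.BasisElem 3 d ∧ w12 = x9 + T.bar d := by
  obtain ⟨-, he⟩ := C.natComb_w12.sub C.int C.hx9 C.ip_w12_x9_ne_zero
  have h1 : T.ip w12 1 = 0 := by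
    have h : T.ip (T.bar b * y9) 1 = 0 := by
      rw [T.ip_bar_mul, mul_one, C.basisElem_y9.ip_eq_zero C.hb]
    simpa [C.bar_mul_y9, C.hx15.ip_eq_zero .one] using h
  have he3 := he.basisElem_three C.int C.noSmall (by simp [h1, C.hx9.ip_eq_zero .one])
  exact ⟨_, he3.bar, by rw [T.bar_bar]; ring⟩

lemma bar_ne : T.bar b ≠ b := by
  intro h
  have h1 := congrArg (T.ip · 1) C.bar_mul_b
  simp [h, C.b_mul_b, C.hc.ip_eq_zero .one, C.hb6.ip_eq_zero .one, C.hb8.ip_eq_zero .one,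
    T.ip_self _ T.one_mem] at h1

end Configuration

/-! ### The elements `d`, `y` and `c8` -/

/-- A configuration together with the basis element `d` of degree 3 for which `w12 = x9 + d̄`; the
remainders `y` and `c8` of `b * x9` and `d * d̄` turn out to be basis elements of degrees 3
and 8. -/
structure SplitConfiguration (T : TAData A)
    (b c b6 b8 x6 x9 x10 x15 y9 y15 u17 v27 w12 d y c8 : A) : Prop
    extends T.Configuration b c b6 b8 x6 x9 x10 x15 y9 y15 u17 v27 w12 where
  hd : T.BasisElem 3 d
  w12_eq : w12 = x9 + T.bar d
  b_mul_x9 : b * x9 = y15 + y9 + y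
  d_mul_bar : d * T.bar d = 1 + c8

namespace SplitConfiguration

variable {b c b6 b8 x6 x9 x10 x15 y9 y15 u17 v27 w12 d y c8 : A}
  (C : T.SplitConfiguration b c b6 b8 x6 x9 x10 x15 y9 y15 u17 v27 w12 d y c8)
include C

lemma c_mul_x9_eq_add : c * x9 = T.bar x15 + T.bar x9 + d := by
  rw [C.c_mul_x9, C.w12_eq, map_add, T.bar_bar, add_assoc]

lemma ip_d_c_mul_x9 : T.ip d (c * x9) = 1 := by
  rw [C.c_mul_x9_eq_add]
  simp [C.hd.ip_self, C.hd.ip_eq_zero C.hx15.bar, C.hd.ip_eq_zero C.hx9.bar]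

lemma c_mul_d : c * d = x9 :=
  (C.hc.natComb.mul C.int C.hd.natComb).eq_of_ip_ne_zero C.int C.hx9
    (by simp [C.ip_c_mul, C.ip_d_c_mul_x9])

lemma c_mul_bar_d : c * T.bar d = T.bar x9 := by
  simpa [C.bar_c] using congrArg T.bar C.c_mul_d

lemma bar_mul_d : T.bar b * d = y9 :=
  (C.hb.bar.natComb.mul C.int C.hd.natComb).eq_of_ip_ne_zero C.int C.basisElem_y9
    (by simp [T.ip_bar_mul, ← C.c_mul_x9_eq_b_mul_y9, C.ip_d_c_mul_x9])

lemma b_mul_bar_d : b * T.bar d = y9 := by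
  simpa [C.bar_y9, T.bar_bar] using congrArg T.bar C.bar_mul_d

lemma b8_mul_bar_d : b8 * T.bar d = x15 + x9 := by
  linear_combination (-T.bar d) * C.c_mul_c + c * C.c_mul_bar_d + C.c_mul_bar_x9 + C.w12_eq

lemma b6_mul_bar_d : b6 * T.bar d = T.bar x15 + d := by
  linear_combination (-T.bar d) * C.b_mul_b + b * C.b_mul_bar_d - C.c_mul_bar_d -
    C.c_mul_x9_eq_b_mul_y9 + C.c_mul_x9_eq_add

lemma b6_mul_d : b6 * d = x15 + T.bar d := by
  simpa [C.bar_b6, T.bar_bar] using congrArg T.bar C.b6_mul_bar_d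

lemma basisElem_y : T.BasisElem 3 y := by
  refine (C.hb.natComb.mul C.int C.hx9.natComb).basisElem_of_ip_self_eq_three C.int
    C.basisElem_y15 C.basisElem_y9 (C.basisElem_y15.ip_eq_zero C.basisElem_y9) ?_ ?_ ?_ C.b_mul_x9
  · rw [C.ip_b_mul_b_mul, C.c_mul_x9_eq_add, C.hx15.bar.ip_add_add_self C.hx9.bar C.hd]
  · rw [T.ip_mul_left, C.bar_mul_y15]
    simp [T.ip_ofNat_mul_right, C.hx9.ip_self, C.hx9.ip_eq_zero C.hx6, C.hx9.ip_eq_zero C.hx15]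
  · rw [T.ip_mul_left, C.bar_mul_y9, C.w12_eq]
    simp [C.hx9.ip_self, C.hx9.ip_eq_zero C.hx15, C.hx9.ip_eq_zero C.hd.bar]

lemma bar_y : T.bar y = y := by
  have h : y = b8 * y9 - b6 - 3 * y15 - 2 * y9 := by
    linear_combination y9 * C.bar_mul_b - b * C.bar_mul_y9 - b * C.w12_eq - C.b_mul_x15 -
      C.b_mul_bar_d - C.b_mul_x9
  rw [h]
  simp only [map_sub, map_mul, map_ofNat, C.bar_b8, C.bar_y9, C.bar_b6, C.bar_y15]

lemma x6_mul_bar_d : x6 * T.bar d = y15 + y := by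
  have h : T.bar x6 * d = y15 + y := by
    linear_combination (-d) * C.c_mul_b + b * C.c_mul_d - C.bar_mul_d + C.b_mul_x9
  simpa [T.bar_bar, C.bar_y15, C.bar_y] using congrArg T.bar h

lemma exists_d_mul_d_eq : ∃ z, T.BasisElem 3 z ∧ d * d = b6 + z := by
  have h6 : T.ip (d * d) b6 = 1 := by
    rw [T.ip_mul_left, mul_comm, C.b6_mul_bar_d]
    simp [C.hd.ip_self, C.hd.ip_eq_zero C.hx15.bar]
  have h1 : T.ip (d * d - b6) 1 = T.ip d (T.bar d) := by
    rw [map_sub, LinearMap.sub_apply, C.hb6.ip_eq_zero .one, sub_zero, T.ip_mul_left, mul_one]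
  obtain ⟨-, hz⟩ := (C.hd.natComb.mul C.int C.hd.natComb).sub C.int C.hb6 (by simp [h6])
  refine ⟨_, hz.basisElem_three C.int C.noSmall ?_, (add_sub_cancel _ _).symm⟩
  by_contra hne
  have hdd : T.ip d (T.bar d) = 1 := by
    rw [← C.hd.eq_of_ip_ne_zero C.hd.bar (h1 ▸ hne), C.hd.ip_self]
  obtain ⟨-, hz'⟩ := hz.sub C.int .one hne
  obtain ⟨_, _, _, _, _, _⟩ := hz'.exists_three_le C.int C.noSmall (by decide)
    (by rw [map_sub, LinearMap.sub_apply, h1, hdd, BasisElem.one.ip_self, sub_self])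
  omega

lemma ip_d_mul_d_self : T.ip (d * d) (d * d) = 2 := by
  obtain ⟨z, hz, h⟩ := C.exists_d_mul_d_eq
  rw [h, C.hb6.ip_add_self hz]

lemma basisElem_c8 : T.BasisElem 8 c8 := by
  have h1 : T.ip (d * T.bar d) 1 = 1 := by rw [← T.ip_eq_ip_one, C.hd.ip_self]
  have h2 : T.ip (d * T.bar d) (d * T.bar d) = 2 := by
    rw [T.ip_mul_bar_mul_bar, C.ip_d_mul_d_self]
  obtain rfl : d * T.bar d - 1 = c8 := by rw [C.d_mul_bar, add_sub_cancel_left]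
  refine ((C.hd.natComb.mul C.int C.hd.bar.natComb).sub C.int .one (by simp [h1]))
    |>.2.basisElem_of_ip_self_eq_one ?_
  simp only [map_sub, LinearMap.sub_apply, T.ip_symm 1 (d * T.bar d), h1, h2,
    BasisElem.one.ip_self]
  norm_num

lemma bar_c8 : T.bar c8 = c8 := by
  have h := congrArg T.bar C.d_mul_bar
  simp only [map_mul, map_add, map_one, T.bar_bar] at h
  linear_combination C.d_mul_bar - h

lemma ip_b8_c8 : T.ip b8 c8 = 0 := by
  have h : T.ip (d * T.bar d) (b * T.bar b) = 1 := by
    rw [T.ip_mul_mul_comm, T.bar_bar, mul_comm d, C.bar_mul_d, C.basisElem_y9.ip_self]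
  rw [C.d_mul_bar, mul_comm b, C.bar_mul_b] at h
  rw [T.ip_symm]
  simpa [C.basisElem_c8.ip_eq_zero .one, BasisElem.one.ip_eq_zero C.hb8,
    BasisElem.one.ip_self] using h

lemma b_mul_bar_mul_bar_d : b * (T.bar b * T.bar d) = T.bar d + x15 + x9 := by
  linear_combination T.bar d * C.bar_mul_b + C.b8_mul_bar_d

lemma basisElem_bar_mul_bar_d : T.BasisElem 9 (T.bar b * T.bar d) :=
  (C.hb.bar.natComb.mul C.int C.hd.bar.natComb).basisElem_of_ip_self_eq_one
    (by rw [C.ip_bar_mul_bar_mul, C.c_mul_bar_d, C.hx9.bar.ip_self])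

lemma ip_u17_bar_mul_bar_d : T.ip u17 (T.bar b * T.bar d) = 1 := by
  have h : T.ip (T.bar b * x9) (T.bar b * T.bar d) = 1 := by
    rw [T.ip_bar_mul, C.b_mul_bar_mul_bar_d]
    simp [C.hx9.ip_self, C.hx9.ip_eq_zero C.hx15, C.hx9.ip_eq_zero C.hd.bar]
  simpa [C.bar_mul_x9, C.hx10.ip_eq_zero C.basisElem_bar_mul_bar_d] using h

lemma ip_v27_bar_mul_bar_d : T.ip v27 (T.bar b * T.bar d) = 1 := by
  have h : T.ip (T.bar b * x15) (T.bar b * T.bar d) = 1 := by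
    rw [T.ip_bar_mul, C.b_mul_bar_mul_bar_d]
    simp [C.hx15.ip_self, C.hx15.ip_eq_zero C.hx9, C.hx15.ip_eq_zero C.hd.bar]
  simpa [C.bar_mul_x15, C.hx10.ip_eq_zero C.basisElem_bar_mul_bar_d,
    C.hb8.ip_eq_zero C.basisElem_bar_mul_bar_d] using h

lemma ip_v27_c8 : T.ip v27 c8 = 1 := by
  have h6 : b6 * T.bar b6 = 1 + b8 + v27 := by
    rw [C.bar_b6]
    linear_combination (-b6) * C.b_mul_b + b * C.b6_mul_b - C.c_mul_b6 + C.bar_mul_b +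
      C.b_mul_bar_x15 + C.bar_mul_x15
  have h : T.ip (b6 * d) (b6 * d) = 2 := by rw [C.b6_mul_d, C.hx15.ip_add_self C.hd.bar]
  rw [T.ip_mul_mul_comm, h6, mul_comm _ d, C.d_mul_bar] at h
  simp only [map_add, LinearMap.add_apply, BasisElem.one.ip_self, C.hb8.ip_eq_zero .one,
    C.ip_v27_one, BasisElem.one.ip_eq_zero C.basisElem_c8, C.ip_b8_c8] at h
  linear_combination h

lemma basisElem_u17_sub : T.BasisElem 8 (u17 - T.bar b * T.bar d) := by
  refine (C.natComb_u17.sub C.int C.basisElem_bar_mul_bar_d (by simp [C.ip_u17_bar_mul_bar_d]))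
    |>.2.basisElem_of_ip_self_eq_one ?_
  simp only [map_sub, LinearMap.sub_apply, T.ip_symm (T.bar b * T.bar d) u17, C.ip_self_u17,
    C.ip_self_w12, C.ip_u17_bar_mul_bar_d, C.basisElem_bar_mul_bar_d.ip_self]
  norm_num

lemma ip_v27_u17_sub : T.ip v27 (u17 - T.bar b * T.bar d) = 1 := by
  rw [map_sub, C.ip_v27_bar_mul_bar_d, T.ip_symm, C.ip_u17_v27, C.w12_eq]
  simp [C.hx9.ip_self, C.hd.bar.ip_eq_zero C.hx9]

-- Otherwise subtracting all three constituents found in `v27` leaves degree 27 - 9 - 8 - 8 = 2.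
lemma u17_eq : u17 = T.bar b * T.bar d + c8 := by
  rw [← sub_eq_iff_eq_add']
  by_contra hne
  have hr : T.BasisElem 9 (T.bar b * T.bar d) := C.basisElem_bar_mul_bar_d
  have hk := C.basisElem_u17_sub
  have hvr := C.ip_v27_bar_mul_bar_d
  have hvk := C.ip_v27_u17_sub
  generalize u17 - T.bar b * T.bar d = k at *
  generalize T.bar b * T.bar d = r at *
  have hkc : T.ip k c8 = 0 := T.ip_ne _ hk.mem _ C.basisElem_c8.mem hne
  obtain ⟨-, h18⟩ := C.natComb_v27.sub C.int hr (by simp [hvr])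
  obtain ⟨-, h10⟩ := h18.sub C.int hk (by simp [hvk, hr.ip_eq_zero hk])
  obtain ⟨-, h2⟩ := h10.sub C.int C.basisElem_c8
    (by simp [C.ip_v27_c8, hr.ip_eq_zero C.basisElem_c8, hkc])
  obtain ⟨_, _, _, _, _, _⟩ := h2.exists_three_le C.int C.noSmall (by decide)
    (by simp [C.ip_v27_one, hr.ip_eq_zero .one, hk.ip_eq_zero .one, C.basisElem_c8.ip_eq_zero .one])
  omega

lemma ip_b_mul_x9_d_mul_d : T.ip (b * x9) (d * d) = 1 := by
  calc T.ip (b * x9) (d * d) = T.ip (b * T.bar x9) (d * T.bar d) := by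
        rw [← C.c_mul_bar_d, ← C.c_mul_d, ← mul_assoc, ← mul_assoc, T.ip_mul_bar_mul_bar]
    _ = T.ip (x10 + (T.bar b * T.bar d + c8)) (1 + c8) := by
        rw [C.b_mul_bar_x9, C.bar_mul_x9, C.u17_eq, C.d_mul_bar]
    _ = 1 := by
        simp [C.hx10.ip_eq_zero .one, C.hx10.ip_eq_zero C.basisElem_c8, C.basisElem_c8.ip_self,
          C.basisElem_c8.ip_eq_zero .one, C.basisElem_bar_mul_bar_d.ip_eq_zero .one,
          C.basisElem_bar_mul_bar_d.ip_eq_zero C.basisElem_c8]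

lemma d_mul_d : d * d = b6 + y := by
  obtain ⟨z, hz, hdd⟩ := C.exists_d_mul_d_eq
  have h := C.ip_b_mul_x9_d_mul_d
  rw [C.b_mul_x9, hdd] at h
  simp only [map_add, LinearMap.add_apply, C.basisElem_y15.ip_eq_zero C.hb6,
    C.basisElem_y15.ip_eq_zero hz, C.basisElem_y9.ip_eq_zero C.hb6, C.basisElem_y9.ip_eq_zero hz,
    C.basisElem_y.ip_eq_zero C.hb6, zero_add] at h
  rw [hdd, C.basisElem_y.eq_of_ip_ne_zero hz (by simp [h])]

lemma bar_d_mul_y : T.bar d * y = T.bar x6 + d := by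
  refine (C.hd.bar.natComb.mul C.int C.basisElem_y.natComb).eq_add C.int C.hx6.bar C.hd
    (C.hx6.bar.ip_eq_zero C.hd) ?_ ?_
  · rw [← T.ip_bar_bar, map_mul, T.bar_bar, T.bar_bar, C.bar_y, T.ip_mul_left, mul_comm,
      C.x6_mul_bar_d]
    simp [C.basisElem_y.ip_self, C.basisElem_y.ip_eq_zero C.basisElem_y15]
  · rw [T.ip_bar_mul, C.d_mul_d]
    simp [C.basisElem_y.ip_self, C.basisElem_y.ip_eq_zero C.hb6]

lemma y_mul_y : y * y = 1 + c8 := by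
  have h1 : T.ip (y * y) 1 = 1 := by rw [T.ip_mul_left, mul_one, C.bar_y, C.basisElem_y.ip_self]
  have h : T.ip (y * y) (d * T.bar d) = 2 := by
    rw [T.ip_mul_mul_comm, C.bar_y, mul_comm y, C.bar_d_mul_y,
      C.hx6.bar.ip_add_self C.hd]
  rw [C.d_mul_bar, map_add, h1] at h
  exact (C.basisElem_y.natComb.mul C.int C.basisElem_y.natComb).eq_add C.int .one C.basisElem_c8
    (BasisElem.one.ip_eq_zero C.basisElem_c8) (by simp [h1])
    (by rw [eq_sub_of_add_eq' h]; norm_num)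

lemma c8_ne : c8 ≠ b8 := by
  rintro rfl
  simpa [C.basisElem_c8.ip_self] using C.ip_b8_c8

lemma one_add_c8_ne : (1 : A) + c8 ≠ 1 + b8 := fun h => C.c8_ne (add_left_cancel h)

lemma d_ne_c : d ≠ c := by
  rintro rfl
  exact C.one_add_c8_ne (by rw [← C.d_mul_bar, C.bar_c, C.c_mul_c])

lemma d_ne_b : d ≠ b := by
  rintro rfl
  exact C.one_add_c8_ne (by rw [← C.d_mul_bar, mul_comm, C.bar_mul_b])

lemma d_ne_bar_b : d ≠ T.bar b := by
  rintro rfl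
  exact C.one_add_c8_ne (by rw [← C.d_mul_bar, T.bar_bar, C.bar_mul_b])

lemma y_ne_b : y ≠ b := by
  rintro rfl
  exact C.bar_ne C.bar_y

lemma y_ne_bar_b : y ≠ T.bar b := by
  rintro rfl
  exact C.bar_ne (by rw [← C.bar_y, T.bar_bar])

lemma y_ne_c : y ≠ c := by
  rintro rfl
  exact C.one_add_c8_ne (by rw [← C.y_mul_y, C.c_mul_c])

end SplitConfiguration

end TAData

theorem stmt_18_general {A : Type} [CommRing A] [Algebra ℂ A] (T : TAData A)
    (hInt : T.Integral) (hSmall : T.NoSmall)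
    (b3 b8 c3 b6 x6 x15 x10 x9 : A)
    (hb3 : b3 ∈ T.B) (hd3 : T.deg b3 = 3)
    (hb8 : b8 ∈ T.B) (hd8 : T.deg b8 = 8)
    (hmul : T.bar b3 * b3 = 1 + b8)
    (hc3 : c3 ∈ T.B) (hdc3 : T.deg c3 = 3) (hrealc3 : T.bar c3 = c3)
    (hb6 : b6 ∈ T.B) (hd6 : T.deg b6 = 6)
    (hsq : b3 * b3 = c3 + b6)
    (hx6 : x6 ∈ T.B) (hdx6 : T.deg x6 = 6)
    (hx6eq : T.bar b3 * c3 = b3 + x6)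
    (hx15 : x15 ∈ T.B) (hdx15 : T.deg x15 = 15)
    (hx15eq : b6 * T.bar b3 = b3 + x15)
    (hx10 : x10 ∈ T.B) (hdx10 : T.deg x10 = 10)
    (hx10eq : x6 * T.bar b3 = b8 + x10)
    (hx9 : x9 ∈ T.B) (hdx9 : T.deg x9 = 9)
    (hx9eq : x10 * b3 = x15 + x6 + x9) :
    ∃ d3 ∈ T.B, T.deg d3 = 3 ∧ d3 ≠ c3 ∧ d3 ≠ b3 ∧ d3 ≠ T.bar b3 ∧
      x9 * c3 = T.bar x15 + d3 + T.bar x9 ∧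
      ∃ c8 ∈ T.B, T.deg c8 = 8 ∧ T.bar c8 = c8 ∧ c8 ≠ b8 ∧
        d3 * T.bar d3 = 1 + c8 ∧
        ∃ y3 ∈ T.B, T.deg y3 = 3 ∧ T.bar y3 = y3 ∧
          y3 ≠ b3 ∧ y3 ≠ T.bar b3 ∧ y3 ≠ c3 ∧
          d3 * d3 = b6 + y3 ∧ y3 * y3 = 1 + c8 := by
  have C : T.Configuration b3 c3 b6 b8 x6 x9 x10 x15 _ _ _ _ _ :=
    { int := hInt, noSmall := hSmall
      hb := ⟨hb3, hd3⟩, hc := ⟨hc3, hdc3⟩, hb6 := ⟨hb6, hd6⟩, hb8 := ⟨hb8, hd8⟩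
      hx6 := ⟨hx6, hdx6⟩, hx9 := ⟨hx9, hdx9⟩, hx10 := ⟨hx10, hdx10⟩, hx15 := ⟨hx15, hdx15⟩
      bar_c := hrealc3, bar_mul_b := hmul, b_mul_b := hsq, c_mul_bar := mul_comm c3 _ ▸ hx6eq
      b6_mul_bar := hx15eq, x6_mul_bar := hx10eq, x10_mul_b := hx9eq
      c_mul_b8 := (add_sub_cancel _ _).symm
      c_mul_x10 := (add_sub_cancel _ _).symm
      bar_mul_x9 := (add_sub_cancel _ _).symm
      bar_mul_x15 := (add_sub_cancel _ _).symm
      bar_mul_y9 := (add_sub_cancel _ _).symm }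
  obtain ⟨d, hd, hw⟩ := C.exists_w12_eq_x9_add
  have S : T.SplitConfiguration b3 c3 b6 b8 x6 x9 x10 x15 _ _ _ _ _ d _ _ :=
    { C with
      hd := hd, w12_eq := hw
      b_mul_x9 := (add_sub_cancel _ _).symm
      d_mul_bar := (add_sub_cancel _ _).symm }
  exact ⟨d, S.hd.mem, S.hd.deg, S.d_ne_c, S.d_ne_b, S.d_ne_bar_b,
    by rw [mul_comm, S.c_mul_x9_eq_add]; ring,
    _, S.basisElem_c8.mem, S.basisElem_c8.deg, S.bar_c8, S.c8_ne, S.d_mul_bar,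
    _, S.basisElem_y.mem, S.basisElem_y.deg, S.bar_y, S.y_ne_b, S.y_ne_bar_b, S.y_ne_c,
    S.d_mul_d, S.y_mul_y⟩

/-- Lemmas 8.4, 8.5: for a NITA generated by non-real `b₃` with
`b̄₃b₃ = 1 + b₈`, `b₃² = c₃ + b₆`, `c₃` real and `(b₈b₃, b₈b₃) = 3`, with
`x₆`, `x₁₅`, `x₁₀`, `x₉` given by `b̄₃c₃ = b₃ + x₆`, `b₆b̄₃ = b₃ + x₁₅`,
`x₆b̄₃ = b₈ + x₁₀`, `x₁₀b₃ = x₁₅ + x₆ + x₉`: there are `d₃ ∉ {c₃, b₃, b̄₃}`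
and `d₉ = x̄₉` with `x₉c₃ = x̄₁₅ + d₃ + x̄₉`, `d₃d̄₃ = 1 + c₈` for a real
`c₈ ≠ b₈`, `d₃² = b₆ + y₃` with `y₃` real, `y₃ ∉ {b₃, b̄₃, c₃}`, and
`y₃² = 1 + c₈`. -/
theorem stmt_18 {A : Type} [CommRing A] [Algebra ℂ A] (T : TAData A)
    (hInt : T.Integral) (hSmall : T.NoSmall)
    (b3 b8 c3 b6 x6 x15 x10 x9 : A)
    (hb3 : b3 ∈ T.B) (hd3 : T.deg b3 = 3) (hnr : T.bar b3 ≠ b3)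
    (hgen : T.GeneratedBy b3)
    (hb8 : b8 ∈ T.B) (hd8 : T.deg b8 = 8)
    (hmul : T.bar b3 * b3 = 1 + b8)
    (hc3 : c3 ∈ T.B) (hdc3 : T.deg c3 = 3) (hrealc3 : T.bar c3 = c3)
    (hb6 : b6 ∈ T.B) (hd6 : T.deg b6 = 6)
    (hsq : b3 * b3 = c3 + b6)
    (hip : T.ip (b8 * b3) (b8 * b3) = 3)
    (hx6 : x6 ∈ T.B) (hdx6 : T.deg x6 = 6) (hnrx6 : T.bar x6 ≠ x6)
    (hx6eq : T.bar b3 * c3 = b3 + x6)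
    (hx15 : x15 ∈ T.B) (hdx15 : T.deg x15 = 15)
    (hx15eq : b6 * T.bar b3 = b3 + x15)
    (hx10 : x10 ∈ T.B) (hdx10 : T.deg x10 = 10) (hrealx10 : T.bar x10 = x10)
    (hx10eq : x6 * T.bar b3 = b8 + x10)
    (hx9 : x9 ∈ T.B) (hdx9 : T.deg x9 = 9)
    (hx9eq : x10 * b3 = x15 + x6 + x9) :
    ∃ d3 ∈ T.B, T.deg d3 = 3 ∧ d3 ≠ c3 ∧ d3 ≠ b3 ∧ d3 ≠ T.bar b3 ∧
      x9 * c3 = T.bar x15 + d3 + T.bar x9 ∧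
      ∃ c8 ∈ T.B, T.deg c8 = 8 ∧ T.bar c8 = c8 ∧ c8 ≠ b8 ∧
        d3 * T.bar d3 = 1 + c8 ∧
        ∃ y3 ∈ T.B, T.deg y3 = 3 ∧ T.bar y3 = y3 ∧
          y3 ≠ b3 ∧ y3 ≠ T.bar b3 ∧ y3 ≠ c3 ∧
          d3 * d3 = b6 + y3 ∧ y3 * y3 = 1 + c8 := by
  exact stmt_18_general T hInt hSmall b3 b8 c3 b6 x6 x15 x10 x9 hb3 hd3 hb8 hd8 hmul hc3 hdc3
    hrealc3 hb6 hd6 hsq hx6 hdx6 hx6eq hx15 hdx15 hx15eq hx10 hdx10 hx10eq hx9 hdx9 hx9eq
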